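/- For all integers a, b ≥ 0, the following identity holds in the polynomial ring ℤ[q]: (Σ_{T ∈ S_G2(a,b)} q^{r(T)}) · (1 − q)(1 − q)(1 − q²)(1 − q³)(1 − q⁴)(1 − q⁵) = (1 − q^{a+1})(1 − q^{b+1})(1 − q^{a+b+2})(1 − q^{a+2b+3})(1 − q^{a+3b+4})(1 − q^{2a+3b+5}), where r(T) = Σ_{j=1}^{b} c(T^(j)) + Σ_{j=b+1}^{a+b} (7 − T^(j)_1), with c given on length-two columns by c(1,2)=10, c(1,3)=9, c(1,4)=8, c(1,5)=7, c(1,6)=6, c(1,7)=5, c(2,5)=6, c(2,6)=5, c(2,7)=4, c(3,6)=4, c(3,7)=3, c(4,7)=2, c(5,7)=1, c(6,7)=0. -/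

import Mathlib

/-!
A tableau is built one column at a time from the right, and the generating function of the
completions of a given column is computed by a transfer-matrix recursion.

The defining conditions of a tableau are equivalent to conditions on consecutive columns only
(`cons_mem_SG2`, `mem_rows`), so the tableaux which may follow a column `c` are enumerated
recursively by `tabs a b c` (`mem_tabs`); as every tableau may follow the column `(1, 2)`,
`SG2 a b` is `tabs a b (1, 2)` (`mem_tabs_one_two`). Hence the generating function `tabGF a b c`
satisfies a linear recursion in `b` (`tabGF_succ`), whose initial values at `b = 0` are generating
functions `rowGF a e` of one-row tableaux with a lower bound on the entries, and these satisfy a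
linear recursion in `a` (`rowGF_succ`).

Both recursions have triangular matrices and can be solved explicitly. The columns `(1, 4)`,
`(1, 5)`, `(2, 5)` have the same possible successors, and similarly for the columns in the other
cases of `colPoly`, so there are six distinct functions of `b`, with transition eigenvalues
`q ^ 10, q ^ 9, q ^ 6, q ^ 4, q, 1`. After multiplication by the denominator
`(1 - q) (1 - q) (1 - q ^ 2) (1 - q ^ 3) (1 - q ^ 4) (1 - q ^ 5)` the solution is a polynomial
`colPoly q x y c` in `q`, `x = q ^ a` and `y = q ^ b`. That it is a solution is a polynomial
identity in the independent variables `q, x, y` (`colPoly_mul`, `colPoly_one`, `rowPoly_mul`,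
`rowPoly_one`). For `c = (1, 2)` the polynomial has twelve terms, and it is the expansion of the
product on the right-hand side of the theorem.
-/


/-- A filling of the shape with `b` columns of length two (each recorded as
(top entry, bottom entry)) followed by `a` columns of length one. -/
abbrev TabT (a b : ℕ) : Type := (Fin b → ℕ × ℕ) × (Fin a → ℕ)

/-- `n_k(T)`: the number of entries of the tableau `T` equal to `k`. -/
def nkOf {m n : ℕ} (T : (Fin m → ℕ × ℕ) × (Fin n → ℕ)) (k : ℕ) : ℕ :=
  (Finset.univ.filter fun j : Fin m => (T.1 j).1 = k).card +
    (Finset.univ.filter fun j : Fin m => (T.1 j).2 = k).card +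
    (Finset.univ.filter fun i : Fin n => T.2 i = k).card

/-- The set of `A2`-semistandard tableaux of shape `(a,b)`: entries from `{1,2,3}`,
rows weakly increasing, columns strictly increasing. -/
def SA2 (a b : ℕ) : Set (TabT a b) :=
  {T | (∀ j : Fin b, 1 ≤ (T.1 j).1 ∧ (T.1 j).1 ≤ 3 ∧ 1 ≤ (T.1 j).2 ∧ (T.1 j).2 ≤ 3 ∧
          (T.1 j).1 < (T.1 j).2) ∧
       (∀ i : Fin a, 1 ≤ T.2 i ∧ T.2 i ≤ 3) ∧
       (∀ j j' : Fin b, j ≤ j' → (T.1 j).1 ≤ (T.1 j').1 ∧ (T.1 j).2 ≤ (T.1 j').2) ∧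
       (∀ i i' : Fin a, i ≤ i' → T.2 i ≤ T.2 i') ∧
       (∀ (j : Fin b) (i : Fin a), (T.1 j).1 ≤ T.2 i)}

/-- The set of `C2`-semistandard tableaux of shape `(a,b)`: entries from `{1,2,3,4}`,
rows weakly increasing, columns strictly increasing, no column equal to `(1,4)`,
and at most one column equal to `(2,3)`. -/
def SC2 (a b : ℕ) : Set (TabT a b) :=
  {T | (∀ j : Fin b, 1 ≤ (T.1 j).1 ∧ (T.1 j).1 ≤ 4 ∧ 1 ≤ (T.1 j).2 ∧ (T.1 j).2 ≤ 4 ∧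
          (T.1 j).1 < (T.1 j).2) ∧
       (∀ i : Fin a, 1 ≤ T.2 i ∧ T.2 i ≤ 4) ∧
       (∀ j j' : Fin b, j ≤ j' → (T.1 j).1 ≤ (T.1 j').1 ∧ (T.1 j).2 ≤ (T.1 j').2) ∧
       (∀ i i' : Fin a, i ≤ i' → T.2 i ≤ T.2 i') ∧
       (∀ (j : Fin b) (i : Fin a), (T.1 j).1 ≤ T.2 i) ∧
       (∀ j : Fin b, T.1 j ≠ (1, 4)) ∧
       (∀ j j' : Fin b, T.1 j = (2, 3) → T.1 j' = (2, 3) → j = j')}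

/-- The restrictions of Figure 4.5 on a pair of adjacent length-two columns of a
`G2`-semistandard tableau. -/
def g2pair2 (c c' : ℕ × ℕ) : Prop :=
  (c = (1, 4) → c' ≠ (1, 4) ∧ c' ≠ (1, 5) ∧ c' ≠ (1, 6) ∧ c' ≠ (1, 7)) ∧
  (c = (1, 5) → c' ≠ (1, 5) ∧ c' ≠ (1, 6) ∧ c' ≠ (1, 7)) ∧
  (c = (1, 6) → c' ≠ (1, 6) ∧ c' ≠ (1, 7) ∧ c' ≠ (2, 6) ∧ c' ≠ (2, 7)) ∧
  (c = (2, 6) → c' ≠ (2, 6) ∧ c' ≠ (2, 7)) ∧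
  (c = (1, 7) → c' ≠ (1, 7) ∧ c' ≠ (2, 7) ∧ c' ≠ (3, 7) ∧ c' ≠ (4, 7)) ∧
  (c = (2, 7) → c' ≠ (2, 7) ∧ c' ≠ (3, 7) ∧ c' ≠ (4, 7)) ∧
  (c = (3, 7) → c' ≠ (3, 7) ∧ c' ≠ (4, 7)) ∧
  (c = (4, 7) → c' ≠ (4, 7))

/-- The restrictions of Figure 4.5 on a length-two column followed by a
length-one column in a `G2`-semistandard tableau. -/
def g2pair1 (c : ℕ × ℕ) (e : ℕ) : Prop :=
  (c = (1, 4) → e ≠ 1) ∧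
  (c = (1, 5) → e ≠ 1) ∧
  (c = (1, 6) → e ≠ 1 ∧ e ≠ 2) ∧
  (c = (2, 6) → e ≠ 2) ∧
  (c = (1, 7) → e ≠ 1 ∧ e ≠ 2 ∧ e ≠ 3 ∧ e ≠ 4) ∧
  (c = (2, 7) → e ≠ 2 ∧ e ≠ 3 ∧ e ≠ 4) ∧
  (c = (3, 7) → e ≠ 3 ∧ e ≠ 4) ∧
  (c = (4, 7) → e ≠ 4)

/-- The set of `G2`-semistandard tableaux of shape `(a,b)`. -/
def SG2 (a b : ℕ) : Set (TabT a b) :=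
  {T | (∀ j : Fin b, 1 ≤ (T.1 j).1 ∧ (T.1 j).1 ≤ 7 ∧ 1 ≤ (T.1 j).2 ∧ (T.1 j).2 ≤ 7 ∧
          (T.1 j).1 < (T.1 j).2) ∧
       (∀ i : Fin a, 1 ≤ T.2 i ∧ T.2 i ≤ 7) ∧
       (∀ j j' : Fin b, j ≤ j' → (T.1 j).1 ≤ (T.1 j').1 ∧ (T.1 j).2 ≤ (T.1 j').2) ∧
       (∀ i i' : Fin a, i ≤ i' → T.2 i ≤ T.2 i') ∧
       (∀ (j : Fin b) (i : Fin a), (T.1 j).1 ≤ T.2 i) ∧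
       (∀ i i' : Fin a, T.2 i = 4 → T.2 i' = 4 → i = i') ∧
       (∀ j : Fin b, T.1 j ≠ (2, 3) ∧ T.1 j ≠ (2, 4) ∧ T.1 j ≠ (3, 4) ∧ T.1 j ≠ (3, 5) ∧
          T.1 j ≠ (4, 5) ∧ T.1 j ≠ (4, 6) ∧ T.1 j ≠ (5, 6)) ∧
       (∀ j j' : Fin b, (j' : ℕ) = (j : ℕ) + 1 → g2pair2 (T.1 j) (T.1 j')) ∧
       (∀ (j : Fin b) (i : Fin a), (j : ℕ) + 1 = b → (i : ℕ) = 0 → g2pair1 (T.1 j) (T.2 i))}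
/-- The rank statistic on `A2`-semistandard tableaux. -/
def rA2 {a b : ℕ} (T : TabT a b) : ℕ :=
  (∑ j : Fin b, ((2 - (T.1 j).1) + (3 - (T.1 j).2))) + ∑ i : Fin a, (3 - T.2 i)

/-- The rank statistic on `C2`-semistandard tableaux. -/
def rC2 {a b : ℕ} (T : TabT a b) : ℕ :=
  (∑ j : Fin b, ((3 - (T.1 j).1) + (4 - (T.1 j).2))) + ∑ i : Fin a, (4 - T.2 i)

/-- The rank contribution `c` of a length-two column of a `G2`-semistandard tableau. -/
def cG2col : ℕ × ℕ → ℕ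
  | (1, 2) => 10
  | (1, 3) => 9
  | (1, 4) => 8
  | (1, 5) => 7
  | (1, 6) => 6
  | (1, 7) => 5
  | (2, 5) => 6
  | (2, 6) => 5
  | (2, 7) => 4
  | (3, 6) => 4
  | (3, 7) => 3
  | (4, 7) => 2
  | (5, 7) => 1
  | (6, 7) => 0
  | _ => 0

/-- The rank statistic on `G2`-semistandard tableaux. -/
def rG2 {a b : ℕ} (T : TabT a b) : ℕ :=
  (∑ j : Fin b, cG2col (T.1 j)) + ∑ i : Fin a, (7 - T.2 i)

/-! ### The solutions of the recursions -/

open Polynomial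

/-- `rowPoly q (q ^ a) e` is the rank generating function of the rows of length `a` that may follow
an entry `e`, multiplied by `denom q`. A row following `4` cannot contain `4`, so `4` and `5` give
the same function. -/
def rowPoly {R : Type*} [CommRing R] (q x : R) : ℕ → R
  | 1 =>
    (1 - q) - (1 - q ^ 4) * q * x + (1 - q ^ 5) * q ^ 3 * x ^ 2 - (1 - q ^ 5) * q ^ 8 * x ^ 4 +
      (1 - q ^ 4) * q ^ 11 * x ^ 5 - (1 - q) * q ^ 15 * x ^ 6
  | 2 =>
    (1 - q) * (1 - q ^ 6) - (1 - q ^ 4) * (1 - q ^ 5) * q * x +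
      (1 - q ^ 4) * (1 - q ^ 5) * q ^ 3 * x ^ 2 - (1 - q ^ 2) * (1 - q ^ 5) * q ^ 8 * x ^ 4 +
      (1 - q) * (1 - q ^ 4) * q ^ 11 * x ^ 5
  | 3 =>
    (1 - q) * (1 - q ^ 5) * (1 - q ^ 6) - (1 - q ^ 4) * (1 - q ^ 4) * (1 - q ^ 5) * q * x +
      (1 - q ^ 3) * (1 - q ^ 4) * (1 - q ^ 5) * q ^ 3 * x ^ 2 -
      (1 - q) * (1 - q ^ 2) * (1 - q ^ 5) * q ^ 8 * x ^ 4
  | 4 | 5 =>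
    (1 - q) * (1 - q ^ 3) * (1 - q ^ 4) * (1 - q ^ 5) -
      (1 - q ^ 2) * (1 - q ^ 3) * (1 - q ^ 4) * (1 - q ^ 5) * q * x +
      (1 - q) * (1 - q ^ 3) * (1 - q ^ 4) * (1 - q ^ 5) * q ^ 3 * x ^ 2
  | 6 =>
    (1 - q) * (1 - q ^ 2) * (1 - q ^ 3) * (1 - q ^ 4) * (1 - q ^ 5) -
      (1 - q) * (1 - q ^ 2) * (1 - q ^ 3) * (1 - q ^ 4) * (1 - q ^ 5) * q * x
  | 7 =>
    (1 - q) * (1 - q) * (1 - q ^ 2) * (1 - q ^ 3) * (1 - q ^ 4) * (1 - q ^ 5)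
  | _ => 0

/-- The solution for the tableaux that may follow a column `(1, 2)`, see `colPoly`. -/
def colPoly12 {R : Type*} [CommRing R] (q x y : R) : R :=
  1 - q * y - q * x + q ^ 5 * x * y ^ 4 + q ^ 3 * x ^ 2 * y - q ^ 8 * x ^ 2 * y ^ 6 -
    q ^ 8 * x ^ 4 * y ^ 4 + q ^ 13 * x ^ 4 * y ^ 9 + q ^ 11 * x ^ 5 * y ^ 6 -
    q ^ 15 * x ^ 5 * y ^ 10 - q ^ 15 * x ^ 6 * y ^ 9 + q ^ 16 * x ^ 6 * y ^ 10

/-- The solution for the tableaux that may follow a column `(1, 3)`, see `colPoly`. -/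
def colPoly13 {R : Type*} [CommRing R] (q x y : R) : R :=
  (1 - q ^ 10) - (1 - q ^ 9) * q * y - (1 - q ^ 10) * q * x + (1 - q ^ 6) * q ^ 5 * x * y ^ 4 +
    (1 - q ^ 9) * q ^ 3 * x ^ 2 * y - (1 - q ^ 4) * q ^ 8 * x ^ 2 * y ^ 6 -
    (1 - q ^ 6) * q ^ 8 * x ^ 4 * y ^ 4 + (1 - q) * q ^ 13 * x ^ 4 * y ^ 9 +
    (1 - q ^ 4) * q ^ 11 * x ^ 5 * y ^ 6 - (1 - q) * q ^ 15 * x ^ 6 * y ^ 9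

/-- The solution for the tableaux that may follow a column `(2, 5)`, see `colPoly`. The columns
`(1, 4)` and `(1, 5)` give the same function. -/
def colPoly25 {R : Type*} [CommRing R] (q x y : R) : R :=
  (1 - q ^ 5) * (1 - q ^ 6) - (1 - q ^ 4) * (1 - q ^ 6) * q * y -
    (1 - q ^ 5) * (1 - q ^ 6) * q * x + (1 - q ^ 2) * (1 - q ^ 5) * q ^ 5 * x * y ^ 4 +
    (1 - q ^ 4) * (1 - q ^ 6) * q ^ 3 * x ^ 2 * y -
    (1 - q) * (1 - q ^ 4) * q ^ 8 * x ^ 2 * y ^ 6 -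
    (1 - q ^ 2) * (1 - q ^ 5) * q ^ 8 * x ^ 4 * y ^ 4 +
    (1 - q) * (1 - q ^ 4) * q ^ 11 * x ^ 5 * y ^ 6

/-- The solution for the tableaux that may follow a column `(3, 6)`, see `colPoly`. The columns
`(1, 6)` and `(2, 6)` give the same function. -/
def colPoly36 {R : Type*} [CommRing R] (q x y : R) : R :=
  (1 - q ^ 3) * (1 - q ^ 5) * (1 + q ^ 3 - q ^ 4 - q ^ 5) -
    (1 - q ^ 3) * (1 - q ^ 4) * (1 - q ^ 5) * q * y -
    (1 - q ^ 3) * (1 - q ^ 5) * (1 + q ^ 3 - q ^ 4 - q ^ 5) * q * x +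
    (1 - q) * (1 - q ^ 2) * (1 - q ^ 5) * q ^ 5 * x * y ^ 4 +
    (1 - q ^ 3) * (1 - q ^ 4) * (1 - q ^ 5) * q ^ 3 * x ^ 2 * y -
    (1 - q) * (1 - q ^ 2) * (1 - q ^ 5) * q ^ 8 * x ^ 4 * y ^ 4

/-- The solution for the tableaux that may follow a column `(5, 7)`, see `colPoly`. The columns
`(1, 7)`, `(2, 7)`, `(3, 7)` and `(4, 7)` give the same function. -/
def colPoly57 {R : Type*} [CommRing R] (q x y : R) : R :=
  (1 - q ^ 2) * (1 - q ^ 3) * (1 - q ^ 4) * (1 - q ^ 5) -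
    (1 - q) * (1 - q ^ 3) * (1 - q ^ 4) * (1 - q ^ 5) * q * y -
    (1 - q ^ 2) * (1 - q ^ 3) * (1 - q ^ 4) * (1 - q ^ 5) * q * x +
    (1 - q) * (1 - q ^ 3) * (1 - q ^ 4) * (1 - q ^ 5) * q ^ 3 * x ^ 2 * y

/-- The solution for the tableaux that may follow a column `(6, 7)`, see `colPoly`. It does not
depend on `b`, as `(6, 7)` can only be followed by `(6, 7)`. -/
def colPoly67 {R : Type*} [CommRing R] (q x : R) : R :=
  (1 - q) * (1 - q ^ 2) * (1 - q ^ 3) * (1 - q ^ 4) * (1 - q ^ 5) -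
    (1 - q) * (1 - q ^ 2) * (1 - q ^ 3) * (1 - q ^ 4) * (1 - q ^ 5) * q * x

/-- `colPoly q (q ^ a) (q ^ b) c` is the rank generating function of the tableaux of shape `(a, b)`
that may follow a column `c` of length two, multiplied by `denom q`. -/
def colPoly {R : Type*} [CommRing R] (q x y : R) : ℕ × ℕ → R
  | (1, 2) => colPoly12 q x y
  | (1, 3) => colPoly13 q x y
  | (1, 4) | (1, 5) | (2, 5) => colPoly25 q x y
  | (1, 6) | (2, 6) | (3, 6) => colPoly36 q x y
  | (1, 7) | (2, 7) | (3, 7) | (4, 7) | (5, 7) => colPoly57 q x y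
  | (6, 7) => colPoly67 q x
  | _ => 0

/-! ### Recursive enumeration of the tableaux -/

/-- The columns of length two that may occur in a `G2`-semistandard tableau. -/
def admCols : Finset (ℕ × ℕ) :=
  {(1, 2), (1, 3), (1, 4), (1, 5), (1, 6), (1, 7), (2, 5), (2, 6), (2, 7), (3, 6), (3, 7),
    (4, 7), (5, 7), (6, 7)}

instance (c c' : ℕ × ℕ) : Decidable (g2pair2 c c') := by
  unfold g2pair2
  repeat' refine @instDecidableAnd _ _ ?_ ?_
  all_goals infer_instance

instance (c : ℕ × ℕ) (e : ℕ) : Decidable (g2pair1 c e) := by unfold g2pair1; infer_instance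

/-- The entries that may stand immediately to the right of the entry `e` in a row of columns of
length one. -/
def nextEntry (e : ℕ) : Finset ℕ :=
  (Finset.Icc 1 7).filter fun d => e ≤ d ∧ (e = 4 → d ≠ 4)

/-- The columns of length two that may immediately follow the column `c`. -/
def nextCol (c : ℕ × ℕ) : Finset (ℕ × ℕ) :=
  admCols.filter fun d => (c.1 ≤ d.1 ∧ c.2 ≤ d.2) ∧ g2pair2 c d

/-- The least entry of a column of length one that may immediately follow the column `c` of length
two; the entries allowed there are exactly those that are at least `bound c` (`bound_spec`). Only
the values on `admCols` are meaningful. -/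
def bound : ℕ × ℕ → ℕ
  | (1, 2) | (1, 3) => 1
  | (1, 4) | (1, 5) | (2, 5) => 2
  | (1, 6) | (2, 6) | (3, 6) => 3
  | (6, 7) => 6
  | _ => 5

/-- The value `bound c` is never `4`, so the condition "at least `bound c`" on an entry is the same
as being allowed after the entry `bound c` in a row. -/
theorem bound_spec : ∀ c ∈ admCols, ∀ e ∈ Finset.Icc 1 7,
    (c.1 ≤ e ∧ g2pair1 c e ↔ bound c ≤ e) ∧ bound c ≠ 4 ∧ bound c ∈ Finset.Icc 1 7 := by
  decide

/-- The rows of length `a` that may follow an entry `e`. -/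
def rows : (a : ℕ) → ℕ → Finset (Fin a → ℕ)
  | 0, _ => {Fin.elim0}
  | a + 1, e => (nextEntry e).biUnion fun d => (rows a d).image (Fin.cons d)

/-- The tableaux of shape `(a, b)` that may follow a column `c` of length two. -/
def tabs (a : ℕ) : (b : ℕ) → ℕ × ℕ → Finset (TabT a b)
  | 0, c => (rows a (bound c)).image fun g => (Fin.elim0, g)
  | b + 1, c => (nextCol c).biUnion fun d =>
      (tabs a b d).image fun T => (Fin.cons d T.1, T.2)

/-- The conditions on the columns of length one among themselves: entries in `{1, ..., 7}`, weakly
increasing, with at most one entry `4`. -/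
def IsRow {a : ℕ} (g : Fin a → ℕ) : Prop :=
  (∀ i, g i ∈ Finset.Icc 1 7) ∧ ∀ i j, i < j → g i ≤ g j ∧ (g i = 4 → g j ≠ 4)

theorem isRow_cons {a : ℕ} (e : ℕ) (g : Fin a → ℕ) :
    IsRow (Fin.cons e g : Fin (a + 1) → ℕ) ↔
      e ∈ Finset.Icc 1 7 ∧ (∀ i, e ≤ g i ∧ (e = 4 → g i ≠ 4)) ∧ IsRow g := by
  simp only [IsRow, Fin.forall_fin_succ, Fin.cons_zero, Fin.cons_succ, Fin.succ_lt_succ_iff,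
    Fin.succ_pos, Fin.not_lt_zero]
  simp only [false_imp_iff, true_imp_iff, true_and]
  tauto

theorem mem_rows {a : ℕ} : ∀ {e : ℕ}, e ∈ Finset.Icc 1 7 → ∀ g : Fin a → ℕ,
    g ∈ rows a e ↔ IsRow (Fin.cons e g : Fin (a + 1) → ℕ) := by
  induction a with
  | zero =>
    intro e he g
    simp only [rows, isRow_cons, he, Finset.mem_singleton, true_and]
    exact iff_of_true (Subsingleton.elim _ _) ⟨fun i => i.elim0, fun i => i.elim0, fun i => i.elim0⟩
  | succ a ih =>
    intro e he g
    induction g using Fin.consCases with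
    | cons e' g =>
      have key : (Fin.cons e' g : Fin (a + 1) → ℕ) ∈ rows (a + 1) e ↔
          e' ∈ nextEntry e ∧ g ∈ rows a e' := by
        simp only [rows, Finset.mem_biUnion, Finset.mem_image]
        constructor
        · rintro ⟨x, hx, y, hy, h⟩
          obtain ⟨rfl, rfl⟩ := Fin.cons_inj.1 h
          exact ⟨hx, hy⟩
        · rintro ⟨h1, h2⟩
          exact ⟨e', h1, g, h2, rfl⟩
      rw [key, isRow_cons e, Fin.forall_fin_succ]
      simp only [nextEntry, Finset.mem_filter, Fin.cons_zero, Fin.cons_succ]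
      constructor
      · rintro ⟨⟨h1, h2, h3⟩, h4⟩
        rw [ih h1] at h4
        refine ⟨he, ⟨⟨h2, h3⟩, fun i => ?_⟩, h4⟩
        have := (((isRow_cons _ _).1 h4).2.1 i)
        omega
      · rintro ⟨-, ⟨h1, -⟩, h3⟩
        have h4 := ((isRow_cons _ _).1 h3).1
        exact ⟨⟨h4, h1⟩, (ih h4 g).2 h3⟩

theorem mem_admCols (c : ℕ × ℕ) : c ∈ admCols ↔
    (1 ≤ c.1 ∧ c.1 ≤ 7 ∧ 1 ≤ c.2 ∧ c.2 ≤ 7 ∧ c.1 < c.2) ∧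
      (c ≠ (2, 3) ∧ c ≠ (2, 4) ∧ c ≠ (3, 4) ∧ c ≠ (3, 5) ∧
          c ≠ (4, 5) ∧ c ≠ (4, 6) ∧ c ≠ (5, 6)) := by
  constructor
  · revert c; decide
  · rintro ⟨⟨h1, h2, h3, h4, h5⟩, h⟩
    obtain ⟨x, y⟩ := c
    simp only at *
    interval_cases x <;> interval_cases y <;> first | omega | (revert h; decide)

/-- The definition of `SG2` with its conditions grouped: admissible columns, the row of columns of
length one, pairs of columns of length two, and pairs of columns of different lengths. -/
theorem mem_SG2 {a b : ℕ} (T : TabT a b) : T ∈ SG2 a b ↔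
    (∀ j, T.1 j ∈ admCols) ∧ IsRow T.2 ∧
      (∀ j j' : Fin b, j < j' → (T.1 j).1 ≤ (T.1 j').1 ∧ (T.1 j).2 ≤ (T.1 j').2) ∧
      (∀ j j' : Fin b, (j' : ℕ) = j + 1 → g2pair2 (T.1 j) (T.1 j')) ∧
      (∀ j i, (T.1 j).1 ≤ T.2 i) ∧
      (∀ (j : Fin b) (i : Fin a), (j : ℕ) + 1 = b → (i : ℕ) = 0 → g2pair1 (T.1 j) (T.2 i)) := by
  simp only [SG2, Set.mem_ofPred_eq, mem_admCols, IsRow, Finset.mem_Icc]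
  constructor
  · rintro ⟨h1, h2, h3, h4, h5, h6, h7, h8, h9⟩
    exact ⟨fun j => ⟨h1 j, h7 j⟩, ⟨h2, fun i j hij => ⟨h4 i j hij.le, fun hi hj =>
      hij.ne (h6 i j hi hj)⟩⟩, fun j j' h => h3 j j' h.le, h8, h5, h9⟩
  · rintro ⟨h1, ⟨h2, h3⟩, h4, h5, h6, h7⟩
    refine ⟨fun j => (h1 j).1, h2, fun j j' h => ?_, fun j j' h => ?_, h6, fun i j hi hj => ?_,
      fun j => (h1 j).2, h5, h7⟩
    · rcases h.eq_or_lt with rfl | h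
      · exact ⟨le_rfl, le_rfl⟩
      · exact h4 _ _ h
    · rcases h.eq_or_lt with rfl | h
      · exact le_rfl
      · exact (h3 _ _ h).1
    · rcases lt_trichotomy i j with h | h | h
      · exact absurd hj ((h3 _ _ h).2 hi)
      · exact h
      · exact absurd hi ((h3 _ _ h).2 hj)

/-- Prepending a column to a tableau whose first column has length two only involves a condition on
the two leftmost columns. -/
theorem cons_mem_SG2 {a b : ℕ} (c : ℕ × ℕ) (f : Fin (b + 1) → ℕ × ℕ) (g : Fin a → ℕ) :
    ((Fin.cons c f, g) : TabT a (b + 2)) ∈ SG2 a (b + 2) ↔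
      (c ∈ admCols ∧ (c.1 ≤ (f 0).1 ∧ c.2 ≤ (f 0).2) ∧ g2pair2 c (f 0)) ∧
        ((f, g) : TabT a (b + 1)) ∈ SG2 a (b + 1) := by
  simp only [mem_SG2]
  constructor
  · rintro ⟨h1, h2, h3, h4, h5, h6⟩
    refine ⟨⟨h1 0, h3 0 1 (by simp), h4 0 1 (by simp)⟩, fun j => h1 j.succ, h2,
      fun j j' h => h3 j.succ j'.succ (by simpa using h),
      fun j j' h => h4 j.succ j'.succ (by simpa using h),
      fun j i => h5 j.succ i, fun j i h h' => h6 j.succ i (by simpa using h) h'⟩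
  · rintro ⟨⟨hc, hle, hp⟩, h1, h2, h3, h4, h5, h6⟩
    have h0 : ∀ j, (f 0).1 ≤ (f j).1 ∧ (f 0).2 ≤ (f j).2 := fun j => by
      rcases (Fin.zero_le j).eq_or_lt with rfl | h
      · exact ⟨le_rfl, le_rfl⟩
      · exact h3 _ _ h
    refine ⟨Fin.cases hc h1, h2, ?_, ?_, ?_, ?_⟩
    · intro j j'
      refine Fin.cases (fun h => absurd h (Fin.not_lt_zero _)) (fun j' => ?_) j'
      refine Fin.cases (fun _ => ?_) (fun j h => h3 j j' (by simpa using h)) j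
      exact ⟨hle.1.trans (h0 j').1, hle.2.trans (h0 j').2⟩
    · intro j j'
      refine Fin.cases (fun h => by simp at h) (fun j' => ?_) j'
      refine Fin.cases (fun h => ?_) (fun j h => h4 j j' (by simpa using h)) j
      have : j' = 0 := Fin.ext (by simpa using h)
      subst this
      exact hp
    · intro j i
      refine Fin.cases (hle.1.trans (h5 0 i)) (fun j => h5 j i) j
    · intro j i
      refine Fin.cases (fun h => by simp at h) (fun j h hi => h6 j i (by simpa using h) hi) j

/-- With respect to the columns of length one to its right, a column `c` of length two behaves like
the single entry `bound c`. -/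
theorem single_mem_SG2 {a : ℕ} (c : ℕ × ℕ) (hc : c ∈ admCols) (f : Fin 0 → ℕ × ℕ)
    (g : Fin a → ℕ) :
    ((Fin.cons c f, g) : TabT a 1) ∈ SG2 a 1 ↔
      IsRow (Fin.cons (bound c) g : Fin (a + 1) → ℕ) := by
  have hb := bound_spec c hc
  have hb1 := (hb 1 (by decide)).2
  rw [mem_SG2, isRow_cons]
  simp only [Fin.forall_fin_one, Fin.cons_zero, hc, hb1.2, true_and, lt_irrefl, false_imp_iff]
  constructor
  · rintro ⟨hg, -, h1, h2⟩
    refine ⟨fun i => ⟨?_, fun h => absurd h hb1.1⟩, hg⟩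
    -- only the first entry is compared with `c`; the others are at least as large
    have hi0 : (⟨0, i.pos⟩ : Fin a) = i ∨ (⟨0, i.pos⟩ : Fin a) < i :=
      (Fin.mk_le_of_le_val (Nat.zero_le _)).eq_or_lt
    have h0 : bound c ≤ g ⟨0, i.pos⟩ := (hb _ (hg.1 _)).1.1 ⟨h1 _, h2 _ rfl rfl⟩
    rcases hi0 with h | h
    · exact h ▸ h0
    · exact h0.trans (hg.2 _ _ h).1
  · rintro ⟨h, hg⟩
    have hci := fun i => (hb _ (hg.1 i)).1.2 (h i).1
    exact ⟨hg, by simp, fun i => (hci i).1, fun i _ _ => (hci i).2⟩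

/-- `tabs a b c` consists of the tableaux that can be continued to the left by the column `c`. -/
theorem mem_tabs {a b : ℕ} : ∀ {c : ℕ × ℕ}, c ∈ admCols → ∀ T : TabT a b,
    T ∈ tabs a b c ↔ ((Fin.cons c T.1, T.2) : TabT a (b + 1)) ∈ SG2 a (b + 1) := by
  induction b with
  | zero =>
    rintro c hc ⟨f, g⟩
    have hb := (bound_spec c hc 1 (by decide)).2.2
    rw [single_mem_SG2 c hc, ← mem_rows hb]
    simp [tabs, Subsingleton.elim f Fin.elim0]
  | succ b ih =>
    rintro c hc ⟨f, g⟩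
    rw [cons_mem_SG2]
    induction f using Fin.consCases with
    | cons c' f =>
      have key : ((Fin.cons c' f, g) : TabT a (b + 1)) ∈ tabs a (b + 1) c ↔
          c' ∈ nextCol c ∧ (f, g) ∈ tabs a b c' := by
        simp only [tabs, Finset.mem_biUnion, Finset.mem_image]
        constructor
        · rintro ⟨x, hx, ⟨y, z⟩, hy, h⟩
          obtain ⟨h', rfl⟩ := Prod.mk.inj h
          obtain ⟨rfl, rfl⟩ := Fin.cons_injective2 h'
          exact ⟨hx, hy⟩
        · rintro ⟨h1, h2⟩
          exact ⟨c', h1, (f, g), h2, rfl⟩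
      rw [key, nextCol, Finset.mem_filter]
      simp only [Fin.cons_zero, hc, true_and]
      constructor
      · rintro ⟨⟨h1, h2⟩, h3⟩
        exact ⟨h2, (ih h1 _).1 h3⟩
      · rintro ⟨h1, h2⟩
        have h3 : c' ∈ admCols := ((mem_SG2 _).1 h2).1 0
        exact ⟨⟨h3, h1⟩, (ih h3 _).2 h2⟩

/-- Every tableau may follow the column `(1, 2)`. -/
theorem mem_tabs_one_two {a b : ℕ} (T : TabT a b) : T ∈ tabs a b (1, 2) ↔ T ∈ SG2 a b := by
  rw [mem_tabs (by decide)]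
  obtain ⟨f, g⟩ := T
  cases b with
  | zero =>
    rw [single_mem_SG2 _ (by decide), isRow_cons, mem_SG2]
    simp only [IsRow, bound, Finset.mem_Icc]
    constructor
    · rintro ⟨-, -, h⟩
      exact ⟨fun j => j.elim0, h, fun j => j.elim0, fun j => j.elim0, fun j => j.elim0,
        fun j => j.elim0⟩
    · rintro ⟨-, h, -⟩
      exact ⟨by simp, fun i => ⟨(h.1 i).1, by simp⟩, h⟩
  | succ b =>
    rw [cons_mem_SG2, and_iff_right_iff_imp]
    intro h
    have h0 : ∀ c ∈ admCols, (1 ≤ c.1 ∧ 2 ≤ c.2) ∧ g2pair2 (1, 2) c := by decide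
    exact ⟨by decide, h0 _ (((mem_SG2 _).1 h).1 0)⟩

/-! ### Generating functions and their recursions -/

theorem sum_biUnion_image {α β γ M : Type*} [DecidableEq γ] [AddCommMonoid M] (s : Finset α)
    (t : α → Finset β) (i : α → β → γ) (hi : ∀ x y x' y', i x y = i x' y' → x = x' ∧ y = y')
    (F : γ → M) :
    ∑ z ∈ s.biUnion (fun x => (t x).image (i x)), F z = ∑ x ∈ s, ∑ y ∈ t x, F (i x y) := by
  rw [Finset.sum_biUnion]
  · refine Finset.sum_congr rfl fun x _ => Finset.sum_image fun y _ y' _ h => (hi _ _ _ _ h).2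
  · intro x _ x' _ hne
    simp only [Function.onFun, Finset.disjoint_left, Finset.mem_image]
    rintro z ⟨y, _, rfl⟩ ⟨y', _, h⟩
    exact hne (hi _ _ _ _ h).1.symm

/-- The rank generating function of the rows of length `a` that may follow an entry `e`. -/
noncomputable def rowGF (a e : ℕ) : ℤ[X] := ∑ g ∈ rows a e, X ^ ∑ i, (7 - g i)

/-- The rank generating function of the tableaux of shape `(a, b)` that may follow a column `c` of
length two. -/
noncomputable def tabGF (a b : ℕ) (c : ℕ × ℕ) : ℤ[X] := ∑ T ∈ tabs a b c, X ^ rG2 T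

theorem rowGF_zero (e : ℕ) : rowGF 0 e = 1 := by simp [rowGF, rows]

theorem rowGF_succ (a e : ℕ) :
    rowGF (a + 1) e = ∑ e' ∈ nextEntry e, X ^ (7 - e') * rowGF a e' := by
  rw [rowGF, rows, sum_biUnion_image _ _ (fun e' g => Fin.cons e' g)
    fun x y x' y' h => Fin.cons_inj.1 h]
  simp only [rowGF, Fin.sum_univ_succ, Fin.cons_zero, Fin.cons_succ, pow_add, Finset.mul_sum]

theorem tabGF_zero (a : ℕ) (c : ℕ × ℕ) : tabGF a 0 c = rowGF a (bound c) := by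
  rw [tabGF, tabs, Finset.sum_image fun g _ g' _ h => (Prod.mk.inj h).2]
  simp [rowGF, rG2]

theorem tabGF_succ (a b : ℕ) (c : ℕ × ℕ) :
    tabGF a (b + 1) c = ∑ c' ∈ nextCol c, X ^ cG2col c' * tabGF a b c' := by
  rw [tabGF, tabs, sum_biUnion_image _ _
    (fun c' (T : TabT a b) => ((Fin.cons c' T.1, T.2) : TabT a (b + 1)))]
  · simp only [tabGF, rG2, Fin.sum_univ_succ, Fin.cons_zero, Fin.cons_succ, pow_add,
      Finset.mul_sum, mul_assoc]
  · rintro x ⟨y, z⟩ x' ⟨y', z'⟩ h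
    obtain ⟨h', rfl⟩ := Prod.mk.inj h
    obtain ⟨rfl, rfl⟩ := Fin.cons_injective2 h'
    exact ⟨rfl, rfl⟩

/-! ### Solving the recursions -/

/-- The common denominator of the solutions, namely the factor on the left-hand side of the
theorem. -/
def denom {R : Type*} [CommRing R] (q : R) : R :=
  (1 - q) * (1 - q) * (1 - q ^ 2) * (1 - q ^ 3) * (1 - q ^ 4) * (1 - q ^ 5)

theorem rowPoly_one {R : Type*} [CommRing R] (q : R) :
    ∀ e ∈ Finset.Icc 1 7, rowPoly q 1 e = denom q := by
  intro e he
  rw [Finset.mem_Icc] at he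
  obtain ⟨h1, h2⟩ := he
  interval_cases e <;> simp only [rowPoly, denom] <;> ring

/-- `rowPoly` satisfies the recursion of `rowGF_succ`; the variable `x` stands for `q ^ a`. -/
theorem rowPoly_mul {R : Type*} [CommRing R] (q x : R) : ∀ e ∈ Finset.Icc 1 7,
    rowPoly q (q * x) e = ∑ e' ∈ nextEntry e, q ^ (7 - e') * rowPoly q x e' := by
  intro e he
  have hI : Finset.Icc 1 7 = {1, 2, 3, 4, 5, 6, 7} := by decide
  rw [nextEntry, Finset.sum_filter, hI]
  rw [hI] at he
  fin_cases he <;> simp [rowPoly] <;> ring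

theorem colPoly_one {R : Type*} [CommRing R] (q x : R) :
    ∀ c ∈ admCols, colPoly q x 1 c = rowPoly q x (bound c) := by
  intro c hc
  fin_cases hc <;> simp only [colPoly, colPoly12, colPoly13, colPoly25, colPoly36, colPoly57,
      colPoly67, bound, rowPoly] <;> ring

/-- The possible successors of each column, in the order of the cases of `colPoly`. -/
theorem nextCol_eq :
    nextCol (1, 2) = admCols ∧
    nextCol (1, 3) = {(1, 3), (1, 4), (1, 5), (1, 6), (1, 7), (2, 5), (2, 6), (2, 7), (3, 6),
      (3, 7), (4, 7), (5, 7), (6, 7)} ∧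
    (∀ c ∈ ({(1, 4), (1, 5), (2, 5)} : Finset (ℕ × ℕ)), nextCol c =
      {(2, 5), (2, 6), (2, 7), (3, 6), (3, 7), (4, 7), (5, 7), (6, 7)}) ∧
    (∀ c ∈ ({(1, 6), (2, 6), (3, 6)} : Finset (ℕ × ℕ)), nextCol c =
      {(3, 6), (3, 7), (4, 7), (5, 7), (6, 7)}) ∧
    (∀ c ∈ ({(1, 7), (2, 7), (3, 7), (4, 7), (5, 7)} : Finset (ℕ × ℕ)), nextCol c =
      {(5, 7), (6, 7)}) ∧
    nextCol (6, 7) = {(6, 7)} := by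
  decide

/-- `colPoly` satisfies the recursion of `tabGF_succ`; the variable `y` stands for `q ^ b`. -/
theorem colPoly_mul {R : Type*} [CommRing R] (q x y : R) : ∀ c ∈ admCols,
    colPoly q x (q * y) c = ∑ c' ∈ nextCol c, q ^ cG2col c' * colPoly q x y c' := by
  obtain ⟨h12, h13, h25, h36, h57, h67⟩ := nextCol_eq
  simp only [Finset.forall_mem_insert, Finset.mem_singleton, forall_eq] at h25 h36 h57
  obtain ⟨h14, h15, h25⟩ := h25
  obtain ⟨h16, h26, h36⟩ := h36
  obtain ⟨h17, h27, h37, h47, h57⟩ := h57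
  simp only [admCols, Finset.forall_mem_insert, Finset.mem_singleton, forall_eq, h12, h13, h14, h15,
    h16, h17, h25, h26, h27, h36, h37, h47, h57, h67]
  refine ⟨?_, ?_, ?_, ?_, ?_, ?_, ?_, ?_, ?_, ?_, ?_, ?_, ?_, ?_⟩
  all_goals
    repeat rw [Finset.sum_insert (by decide)]
    simp only [Finset.sum_singleton, cG2col, colPoly, colPoly12, colPoly13, colPoly25,
      colPoly36, colPoly57, colPoly67]
    ring

/-- The closed form of the generating function of rows, by induction on the length. -/
theorem rowGF_eq (a : ℕ) : ∀ e ∈ Finset.Icc 1 7, rowGF a e * denom X = rowPoly X (X ^ a) e := by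
  induction a with
  | zero => intro e he; rw [rowGF_zero, pow_zero, rowPoly_one _ e he, one_mul]
  | succ a ih =>
    intro e he
    rw [rowGF_succ, pow_succ', rowPoly_mul _ _ e he, Finset.sum_mul]
    refine Finset.sum_congr rfl fun e' he' => ?_
    rw [mul_assoc, ih e' (Finset.mem_filter.1 he').1]

/-- The closed form of the generating function of tableaux, by induction on the number of columns
of length two. -/
theorem tabGF_eq (a b : ℕ) : ∀ c ∈ admCols,
    tabGF a b c * denom X = colPoly X (X ^ a) (X ^ b) c := by
  induction b with
  | zero =>
    intro c hc
    rw [tabGF_zero, pow_zero, colPoly_one _ _ c hc,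
      rowGF_eq a _ (bound_spec c hc 1 (by decide)).2.2]
  | succ b ih =>
    intro c hc
    rw [tabGF_succ, pow_succ', colPoly_mul _ _ _ c hc, Finset.sum_mul]
    refine Finset.sum_congr rfl fun c' hc' => ?_
    rw [mul_assoc, ih c' (Finset.mem_filter.1 hc').1]

/-- The rank generating function of the lattice of `G2`-semistandard tableaux of
shape `(a,b)` satisfies
`(Σ_T q^{r(T)}) (1−q)(1−q)(1−q²)(1−q³)(1−q⁴)(1−q⁵)
  = (1−q^{a+1})(1−q^{b+1})(1−q^{a+b+2})(1−q^{a+2b+3})(1−q^{a+3b+4})(1−q^{2a+3b+5})`. -/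
theorem G2_rank_generating_function (a b : ℕ) :
    (∑ᶠ T ∈ SG2 a b, (Polynomial.X : Polynomial ℤ) ^ rG2 T) *
        ((1 - Polynomial.X) * (1 - Polynomial.X) * (1 - Polynomial.X ^ 2) *
          (1 - Polynomial.X ^ 3) * (1 - Polynomial.X ^ 4) * (1 - Polynomial.X ^ 5)) =
      (1 - Polynomial.X ^ (a + 1)) * (1 - Polynomial.X ^ (b + 1)) *
        (1 - Polynomial.X ^ (a + b + 2)) * (1 - Polynomial.X ^ (a + 2 * b + 3)) *
        (1 - Polynomial.X ^ (a + 3 * b + 4)) * (1 - Polynomial.X ^ (2 * a + 3 * b + 5)) := by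
  have hS : ((tabs a b (1, 2) : Finset (TabT a b)) : Set (TabT a b)) = SG2 a b :=
    Set.ext fun T => mem_tabs_one_two T
  rw [← hS, finsum_mem_coe_finset]
  change tabGF a b (1, 2) * denom X = _
  rw [tabGF_eq a b _ (by decide)]
  simp only [colPoly, colPoly12]
  ring
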